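/- Let b ≥ 2 be an integer and E a nonempty set of base-b digits. Then K(b,E) = (b/#E)·log(b) − Σ_{m=1}^∞ ζ(m+1)·(Σ_{d∈F} v_m(d))/b^{m+1}, where the series on the right converges. -/

import Mathlib

open MeasureTheory Real ENNReal

/-- The digamma function `ψ(x) = d/dx log Γ(x)`. -/
noncomputable def digamma (x : ℝ) : ℝ := deriv (fun y => Real.log (Real.Gamma y)) x

/-- The Kempner sum `K(b,E)`: sum of reciprocals of positive integers whose
base-`b` digits all avoid the excluded set `E`. -/
noncomputable def kempnerSum (b : ℕ) (E : Finset ℕ) : ℝ :=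
  ∑' n : ℕ, if n ≠ 0 ∧ ∀ d ∈ Nat.digits b n, d ∉ E then (n : ℝ)⁻¹ else 0

/-- The measure `μ_{b,E}` on `[0,1)`: the sum, over all finite strings of admissible
digits (digits `< b` not in `E`), of the weighted Dirac mass `b^{-l} δ_{n(X)/b^l}`. -/
noncomputable def kempnerMeasure (b : ℕ) (E : Finset ℕ) : Measure ℝ :=
  Measure.sum (fun X : {l : List ℕ // ∀ d ∈ l, d < b ∧ d ∉ E} =>
    ((b : ℝ≥0∞) ^ X.1.length)⁻¹ •
      Measure.dirac (((Nat.ofDigits b X.1 : ℕ) : ℝ) / (b : ℝ) ^ X.1.length))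

/-- `E₁ = E` if `0 ∉ E`, and `E₁ = (E ∪ {b}) \ {0}` if `0 ∈ E`. -/
def Eone (b : ℕ) (E : Finset ℕ) : Finset ℕ :=
  if 0 ∈ E then insert b (E.erase 0) else E

/-- `ζ(s) = ∑_{k ≥ 1} k⁻ˢ`. -/
noncomputable def zetaVal (s : ℕ) : ℝ := ∑' k : ℕ, (((k : ℝ) + 1) ^ s)⁻¹

/-- `v_m(d) = ∫_{[0,1)} (d - x)^m dμ_{b,E}(x)`. -/
noncomputable def vMoment (b : ℕ) (E : Finset ℕ) (m : ℕ) (d : ℝ) : ℝ :=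
  ∫ x in Set.Ico (0 : ℝ) 1, (d - x) ^ m ∂(kempnerMeasure b E)

/-!
Every admissible string is either empty or starts with an admissible digit, so `μ = μ_{b,E}` is the
sum of a Dirac mass at `0` and of its images under `x ↦ (a + x) / b`, weighted by `1 / b`, for
`a ∈ A`. For the Stieltjes transform `U y = ∫ dμ(x) / (y + x)` this says
`U y = 1 / y + ∑ a ∈ A, U (b y + a)`, while `K(b,E)` is the sum of `U a` over the nonzero digits
`a ∈ A`. Iterating the functional equation at the integers telescopes to
`K(b,E) + ∑ k < N, (∑ a ∈ E₁, U (b k + a) - 1 / (k + 1)) =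
  ∑ N < m ≤ b N, U m + ∑ a ∈ A \ {0}, U (b N + a)`,
and the right-hand side tends to `(b / #E) log b` because `μ` has mass `b / #E`, whence
`U m ∼ (b / #E) / m`.

For `d = b - a`, expanding `U (b k + a) = ∫ dμ(x) / (b (k + 1) - (d - x))` as a geometric series in
`(d - x) / (b (k + 1))` produces the moments `v_m(d)`. The terms of order `0` add up over `a ∈ E₁`
to `1 / (k + 1)`, and summing the others over `k` produces the zeta values.
-/

open Filter Topology

/-- The set `A = D \ E` of admissible base-`b` digits. -/
def admissibleDigits (b : ℕ) (E : Finset ℕ) : Finset ℕ := Finset.range b \ E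

section DigitSets

variable {b : ℕ} {E s : Finset ℕ}

theorem mem_admissibleDigits {d : ℕ} : d ∈ admissibleDigits b E ↔ d < b ∧ d ∉ E := by
  simp [admissibleDigits]

theorem sum_Eone {M : Type*} [AddCommMonoid M] (hb : b ∉ s) (f : ℕ → M) :
    ∑ a ∈ Eone b s, f a = ∑ a ∈ s.erase 0, f a + if 0 ∈ s then f b else 0 := by
  by_cases h0 : 0 ∈ s
  · have hb' : b ∉ s.erase 0 := fun h => hb (Finset.mem_of_mem_erase h)
    simp only [Eone, h0, if_true, Finset.sum_insert hb', add_comm]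
  · simp [Eone, h0]

theorem card_Eone (hb : b ∉ s) : (Eone b s).card = s.card := by
  by_cases h0 : 0 ∈ s
  · have hb' : b ∉ s.erase 0 := fun h => hb (Finset.mem_of_mem_erase h)
    rw [Eone, if_pos h0, Finset.card_insert_of_notMem hb', Finset.card_erase_add_one h0]
  · rw [Eone, if_neg h0]

theorem Eone_subset_Ioc (hb : 0 < b) (hs : s ⊆ Finset.range b) : Eone b s ⊆ Finset.Ioc 0 b := by
  intro a ha
  have := @hs a
  grind [Eone]

theorem sum_Eone_add_sum_Eone_admissibleDigits {M : Type*} [AddCommMonoid M]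
    (hEb : E ⊆ Finset.range b) (f : ℕ → M) :
    ∑ a ∈ Eone b E, f a + ∑ a ∈ Eone b (admissibleDigits b E), f a = ∑ a ∈ Finset.Ioc 0 b, f a := by
  have hdisj : Disjoint (Eone b E) (Eone b (admissibleDigits b E)) := by
    rw [Finset.disjoint_left]
    intro a
    have := @hEb a
    grind [Eone, mem_admissibleDigits]
  rw [← Finset.sum_union hdisj]
  congr 1
  ext a
  have := @hEb a
  grind [Eone, mem_admissibleDigits]

theorem sum_Ioc_mul_mul_add_one {M : Type*} [AddCommMonoid M] (hEb : E ⊆ Finset.range b)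
    (f : ℕ → M) (n : ℕ) :
    ∑ m ∈ Finset.Ioc (b * n) (b * (n + 1)), f m =
      ∑ a ∈ Eone b E, f (b * n + a) + ∑ a ∈ Eone b (admissibleDigits b E), f (b * n + a) := by
  rw [sum_Eone_add_sum_Eone_admissibleDigits hEb fun a => f (b * n + a),
    ← Finset.sum_image (g := (b * n + ·)) (add_right_injective _).injOn,
    Finset.image_add_left_Ioc, add_zero, mul_add_one]

theorem sum_erase_zero_add_sum_range_sum_Eone {G : Type*} [AddCommGroup G] (hb : 0 < b)
    (hEb : E ⊆ Finset.range b) {f g : ℕ → G}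
    (hfg : ∀ n, 0 < n → f n = g n + ∑ a ∈ admissibleDigits b E, f (b * n + a)) (N : ℕ) :
    ∑ a ∈ (admissibleDigits b E).erase 0, f a +
        ∑ k ∈ Finset.range N, (∑ a ∈ Eone b E, f (b * k + a) - g (k + 1)) =
      ∑ m ∈ Finset.Ioc N (b * N), f m +
        ∑ a ∈ (admissibleDigits b E).erase 0, f (b * N + a) := by
  induction N with
  | zero => simp
  | succ N ih =>
    have hbA : b ∉ admissibleDigits b E := by simp [mem_admissibleDigits]
    have hrec : f (N + 1) - g (N + 1) =
        ∑ a ∈ (admissibleDigits b E).erase 0, f (b * (N + 1) + a) +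
          if 0 ∈ admissibleDigits b E then f (b * (N + 1)) else 0 := by
      rw [hfg (N + 1) N.succ_pos, add_sub_cancel_left]
      split_ifs with h0
      · rw [← Finset.sum_erase_add _ _ h0, add_zero]
      · rw [Finset.erase_eq_of_notMem h0, add_zero]
    have hblock := sum_Ioc_mul_mul_add_one hEb f N
    rw [sum_Eone hbA, ← mul_add_one] at hblock
    have hIoc : ∑ m ∈ Finset.Ioc N (b * N), f m + ∑ m ∈ Finset.Ioc (b * N) (b * (N + 1)), f m =
        f (N + 1) + ∑ m ∈ Finset.Ioc (N + 1) (b * (N + 1)), f m := by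
      have h₁ : N ≤ b * N := Nat.le_mul_of_pos_left N hb
      have h₂ : b * N ≤ b * (N + 1) := Nat.mul_le_mul_left b N.le_succ
      have h₃ : N + 1 ≤ b * (N + 1) := Nat.le_mul_of_pos_left (N + 1) hb
      rw [Finset.sum_Ioc_consecutive f h₁ h₂, ← Finset.sum_Ioc_consecutive f N.le_succ h₃,
        Nat.succ_eq_add_one, Nat.Ioc_succ_singleton, Finset.sum_singleton]
    rw [Finset.sum_range_succ, ← add_assoc, ih]
    grind

end DigitSets

section HarmonicBlocks

theorem tendsto_sum_Ioc_mul_inv {b : ℕ} (hb : 0 < b) :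
    Tendsto (fun N : ℕ => ∑ m ∈ Finset.Ioc N (b * N), (m : ℝ)⁻¹) atTop (𝓝 (Real.log b)) := by
  have hbN : Tendsto (fun N : ℕ => b * N) atTop atTop := tendsto_id.const_mul_atTop' hb
  have hγ := (tendsto_harmonic_sub_log.comp hbN).sub tendsto_harmonic_sub_log
  rw [sub_self] at hγ
  refine (zero_add (Real.log b) ▸ hγ.add_const (Real.log b)).congr' ?_
  filter_upwards [eventually_gt_atTop 0] with N hN
  have hlog : Real.log ((b * N : ℕ) : ℝ) = Real.log b + Real.log N := by
    rw [Nat.cast_mul, Real.log_mul (by positivity) (by positivity)]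
  have hharmonic (n : ℕ) : (harmonic n : ℝ) = ∑ m ∈ Finset.Ioc 0 n, (m : ℝ)⁻¹ := by
    rw [harmonic_eq_sum_Icc]
    push_cast
    rfl
  have hsplit := Finset.sum_Ioc_consecutive (fun m : ℕ => (m : ℝ)⁻¹) N.zero_le
    (Nat.le_mul_of_pos_left N hb)
  simp only [Function.comp_apply, hlog, hharmonic]
  linarith

theorem tendsto_sum_Ioc_mul_of_tendsto_mul {f : ℕ → ℝ} {c : ℝ}
    (hf : Tendsto (fun n : ℕ => n * f n) atTop (𝓝 c)) {b : ℕ} (hb : 0 < b) :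
    Tendsto (fun N : ℕ => ∑ m ∈ Finset.Ioc N (b * N), f m) atTop (𝓝 (c * Real.log b)) := by
  suffices h : Tendsto (fun N : ℕ => ∑ m ∈ Finset.Ioc N (b * N), (f m - c * (m : ℝ)⁻¹))
      atTop (𝓝 0) by
    simpa [Finset.sum_sub_distrib, Finset.mul_sum] using
      h.add ((tendsto_sum_Ioc_mul_inv hb).const_mul c)
  have hlog := tendsto_sum_Ioc_mul_inv hb
  rw [Metric.tendsto_atTop'] at hf
  rw [← Asymptotics.isLittleO_one_iff ℝ]
  refine Asymptotics.IsLittleO.trans_isBigO ?_ (hlog.isBigO_one ℝ)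
  rw [Asymptotics.isLittleO_iff]
  intro ε hε
  obtain ⟨n₀, hn₀⟩ := hf ε hε
  filter_upwards [eventually_ge_atTop n₀] with N hN
  calc ‖∑ m ∈ Finset.Ioc N (b * N), (f m - c * (m : ℝ)⁻¹)‖
      ≤ ∑ m ∈ Finset.Ioc N (b * N), ε * (m : ℝ)⁻¹ := norm_sum_le_of_le _ fun m hm => ?_
    _ = ε * ∑ m ∈ Finset.Ioc N (b * N), (m : ℝ)⁻¹ := (Finset.mul_sum _ _ _).symm
    _ ≤ ε * ‖∑ m ∈ Finset.Ioc N (b * N), (m : ℝ)⁻¹‖ := by gcongr; exact le_norm_self _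
  have hNm := (Finset.mem_Ioc.mp hm).1
  have hm : (0 : ℝ) < m := by exact_mod_cast N.zero_le.trans_lt hNm
  have hfactor : f m - c * (m : ℝ)⁻¹ = (m * f m - c) * (m : ℝ)⁻¹ := by field_simp
  rw [hfactor, norm_mul, norm_of_nonneg (inv_pos.mpr hm).le]
  gcongr
  exact (hn₀ m (hN.trans_lt hNm)).le

end HarmonicBlocks

theorem hasSum_zetaVal {s : ℕ} (hs : 1 < s) :
    HasSum (fun k : ℕ => (((k : ℝ) + 1) ^ s)⁻¹) (zetaVal s) := by
  have h := (summable_nat_add_iff 1).mpr (Real.summable_nat_pow_inv.mpr hs)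
  simp only [Nat.cast_add_one] at h
  exact h.hasSum

section DoubleSeries

variable {v : ℕ → ℝ} {C ρ T : ℝ}

theorem summable_div_mul_add_one_pow (hv : ∀ m, |v m| ≤ C * ρ ^ m) (hρ : 0 ≤ ρ) (hρT : ρ < T) :
    Summable fun p : ℕ × ℕ => v (p.1 + 1) / (T * (p.2 + 1)) ^ (p.1 + 2) := by
  have hT : 0 < T := hρ.trans_lt hρT
  have hC : 0 ≤ C := by simpa using (abs_nonneg _).trans (hv 0)
  have hgeom : Summable fun m : ℕ => C * ρ / T ^ 2 * (ρ / T) ^ m :=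
    (summable_geometric_of_lt_one (by positivity) ((div_lt_one hT).mpr hρT)).mul_left _
  refine Summable.of_norm_bounded (hgeom.mul_of_nonneg (hasSum_zetaVal one_lt_two).summable
    (fun m => by positivity) fun k => by positivity) fun ⟨m, k⟩ => ?_
  have hk : (1 : ℝ) ≤ k + 1 := by simp
  calc ‖v (m + 1) / (T * (k + 1)) ^ (m + 2)‖
      = |v (m + 1)| / (T ^ (m + 2) * ((k : ℝ) + 1) ^ (m + 2)) := by
        rw [norm_div, norm_eq_abs, norm_of_nonneg (by positivity), mul_pow]
    _ ≤ C * ρ ^ (m + 1) / (T ^ (m + 2) * ((k : ℝ) + 1) ^ 2) := by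
        gcongr
        · exact hv _
        · omega
    _ = C * ρ / T ^ 2 * (ρ / T) ^ m * (((k : ℝ) + 1) ^ 2)⁻¹ := by
        rw [div_pow]
        field_simp
        ring

theorem summable_zetaVal_mul_and_hasSum {u : ℕ → ℝ} (hv : ∀ m, |v m| ≤ C * ρ ^ m) (hρ : 0 ≤ ρ)
    (hρT : ρ < T)
    (hu : ∀ k : ℕ, HasSum (fun m => v (m + 1) / (T * (k + 1)) ^ (m + 2)) (u k)) :
    Summable (fun m => zetaVal (m + 2) * v (m + 1) / T ^ (m + 2)) ∧
      HasSum u (∑' m, zetaVal (m + 2) * v (m + 1) / T ^ (m + 2)) := by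
  have hsum := (summable_div_mul_add_one_pow hv hρ hρT).hasSum
  have hzeta := hsum.prod_fiberwise (g := fun m => zetaVal (m + 2) * v (m + 1) / T ^ (m + 2))
    fun m => by
      convert! ((hasSum_zetaVal (s := m + 2) (by omega)).mul_right (v (m + 1))).div_const
        (T ^ (m + 2)) using 2 with k
      rw [mul_pow, inv_mul_eq_div, div_div, mul_comm]
  refine ⟨hzeta.summable, ?_⟩
  rw [hzeta.tsum_eq]
  exact ((Equiv.prodComm ℕ ℕ).hasSum_iff.mpr hsum).prod_fiberwise hu

end DoubleSeries

/-- The Stieltjes transform `y ↦ ∫ dμ(x) / (y + x)` of a measure on the real line. -/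
noncomputable def stieltjesTransform (μ : Measure ℝ) (y : ℝ) : ℝ := ∫ x, (y + x)⁻¹ ∂μ

section StieltjesTransform

variable {μ : Measure ℝ} [IsFiniteMeasure μ]

theorem integrable_inv_add (hμ : ∀ᵐ x ∂μ, 0 ≤ x) {y : ℝ} (hy : 0 < y) :
    Integrable (fun x => (y + x)⁻¹) μ := by
  refine .of_bound (by fun_prop) y⁻¹ ?_
  filter_upwards [hμ] with x hx
  rw [norm_of_nonneg (by positivity)]
  gcongr
  linarith

theorem tendsto_mul_stieltjesTransform (hμ : ∀ᵐ x ∂μ, 0 ≤ x) :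
    Tendsto (fun y => y * stieltjesTransform μ y) atTop (𝓝 (μ.real Set.univ)) := by
  have h : Tendsto (fun y => ∫ x, y * (y + x)⁻¹ ∂μ) atTop (𝓝 (∫ _, (1 : ℝ) ∂μ)) := by
    refine tendsto_integral_filter_of_dominated_convergence (fun _ => 1)
      (.of_forall fun y => by fun_prop) ?_ (integrable_const (1 : ℝ)) ?_
    · filter_upwards [eventually_gt_atTop 0] with y hy
      filter_upwards [hμ] with x hx
      rw [norm_of_nonneg (by positivity), ← div_eq_mul_inv]
      exact div_le_one_of_le₀ (by linarith) (by positivity)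
    · refine .of_forall fun x => ?_
      have hx : Tendsto (fun y => 1 - x * (y + x)⁻¹) atTop (𝓝 1) := by
        simpa using ((tendsto_inv_atTop_zero.comp
          (tendsto_atTop_add_const_right atTop x tendsto_id)).const_mul x).const_sub 1
      refine hx.congr' ?_
      filter_upwards [eventually_gt_atTop (-x)] with y hy
      have : y + x ≠ 0 := by linarith
      field_simp
      ring
  simpa [stieltjesTransform, integral_const_mul] using h

theorem tendsto_stieltjesTransform (hμ : ∀ᵐ x ∂μ, 0 ≤ x) :
    Tendsto (stieltjesTransform μ) atTop (𝓝 0) := by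
  have h := tendsto_inv_atTop_zero.mul (tendsto_mul_stieltjesTransform hμ)
  rw [zero_mul] at h
  refine h.congr' ?_
  filter_upwards [eventually_ne_atTop 0] with y hy
  exact inv_mul_cancel_left₀ hy _

theorem abs_integral_sub_pow_le {d ρ : ℝ} (hμ : ∀ᵐ x ∂μ, |d - x| ≤ ρ) (m : ℕ) :
    |∫ x, (d - x) ^ m ∂μ| ≤ μ.real Set.univ * ρ ^ m := by
  rw [mul_comm, ← norm_eq_abs]
  refine norm_integral_le_of_norm_le_const ?_
  filter_upwards [hμ] with x hx
  rw [norm_pow]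
  exact pow_le_pow_left₀ (norm_nonneg _) hx m

theorem hasSum_integral_sub_pow_div {d ρ s : ℝ} (hμ : ∀ᵐ x ∂μ, |d - x| ≤ ρ) (hρs : ρ < s) :
    HasSum (fun m : ℕ => (∫ x, (d - x) ^ m ∂μ) / s ^ (m + 1)) (stieltjesTransform μ (s - d)) := by
  simp only [← integral_div]
  refine hasSum_integral_of_dominated_convergence (fun m _ => ρ ^ m / s ^ (m + 1))
    (fun m => by fun_prop) (fun m => ?_) ?_ (integrable_const _) ?_
  · filter_upwards [hμ] with x hx
    have hρ : 0 ≤ ρ := (abs_nonneg _).trans hx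
    have hs : 0 < s := hρ.trans_lt hρs
    rw [norm_div, norm_pow, norm_of_nonneg (pow_pos hs _).le, norm_eq_abs]
    gcongr
  · filter_upwards [hμ] with x hx
    have hρ : 0 ≤ ρ := (abs_nonneg _).trans hx
    have hs : 0 < s := hρ.trans_lt hρs
    refine ((summable_geometric_of_lt_one (by positivity) ((div_lt_one hs).mpr hρs)).div_const
      s).congr fun m => ?_
    rw [div_pow, div_div, pow_succ]
  · filter_upwards [hμ] with x hx
    have hs : 0 < s := ((abs_nonneg _).trans hx).trans_lt hρs
    have hlt : |(d - x) / s| < 1 := by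
      rw [abs_div, abs_of_pos hs, div_lt_one hs]
      exact hx.trans_lt hρs
    have hgeom := (hasSum_geometric_of_abs_lt_one hlt).div_const s
    have hsum : (1 - (d - x) / s)⁻¹ / s = (s - d + x)⁻¹ := by
      rw [div_eq_mul_inv, ← mul_inv, sub_mul, div_mul_cancel₀ _ hs.ne', one_mul]
      ring_nf
    rw [hsum] at hgeom
    refine hgeom.congr_fun fun m => ?_
    rw [div_pow, div_div, pow_succ]

theorem hasSum_integral_sub_pow_succ_div {d ρ s : ℝ} (hμ : ∀ᵐ x ∂μ, |d - x| ≤ ρ) (hρs : ρ < s) :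
    HasSum (fun m : ℕ => (∫ x, (d - x) ^ (m + 1) ∂μ) / s ^ (m + 2))
      (stieltjesTransform μ (s - d) - μ.real Set.univ / s) := by
  simpa using (hasSum_nat_add_iff' 1).mpr (hasSum_integral_sub_pow_div hμ hρs)

end StieltjesTransform

theorem tsum_list {α : Type*} (f : List α → ℝ≥0∞) :
    ∑' X, f X = f [] + ∑' (a : α) (X : List α), f (a :: X) := by
  have hinj : Function.Injective fun p : α × List α => p.1 :: p.2 := fun p q h =>
    Prod.ext (List.cons.inj h).1 (List.cons.inj h).2
  rw [ENNReal.tsum_eq_add_tsum_ite [], ← hinj.tsum_eq ?_, ENNReal.tsum_prod']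
  · simp
  · rintro (_ | ⟨a, X⟩) hX
    · simp at hX
    · exact ⟨(a, X), rfl⟩

theorem tsum_list_pow_length {α : Type*} [Fintype α] (c : ℝ≥0∞) :
    ∑' X : List α, c ^ X.length = (1 - Fintype.card α * c)⁻¹ := by
  rw [← List.equivSigmaTuple.symm.tsum_eq, ENNReal.tsum_sigma', ← ENNReal.tsum_geometric]
  refine tsum_congr fun n => ?_
  simp [List.equivSigmaTuple, mul_pow]

section DigitStrings

/-- The integer `n(X)` written in base `b` with the digits of `X`, most significant digit first. -/
def stringValue (b : ℕ) {A : Finset ℕ} (X : List A) : ℕ :=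
  Nat.ofDigits b (X.map Subtype.val).reverse

/-- The point `x(X) = n(X) / b ^ l` of the unit interval attached to a string `X` of length `l`. -/
noncomputable def stringPoint (b : ℕ) {A : Finset ℕ} (X : List A) : ℝ :=
  stringValue b X / (b : ℝ) ^ X.length

variable {b : ℕ} {A : Finset ℕ}

theorem stringValue_cons (a : A) (X : List A) :
    stringValue b (a :: X) = stringValue b X + b ^ X.length * a := by
  rw [stringValue, List.map_cons, Nat.ofDigits_reverse_cons, List.length_map, stringValue]

theorem stringPoint_nil : stringPoint b ([] : List A) = 0 := by
  simp [stringPoint, stringValue]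

theorem stringPoint_cons (hb : 0 < b) (a : A) (X : List A) :
    stringPoint b (a :: X) = (a + stringPoint b X) / b := by
  simp only [stringPoint, stringValue_cons, List.length_cons]
  push_cast
  field_simp
  ring

theorem stringPoint_mem_Ico (hA : ∀ a ∈ A, a < b) (hb : 1 < b) (X : List A) :
    stringPoint b X ∈ Set.Ico 0 1 := by
  have hlt : stringValue b X < b ^ X.length := by
    simpa [stringValue] using Nat.ofDigits_lt_base_pow_length hb
      (l := (X.map Subtype.val).reverse) (by simpa using fun a ha _ => hA a ha)
  refine ⟨by unfold stringPoint; positivity, ?_⟩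
  rw [stringPoint, div_lt_one (by positivity)]
  exact_mod_cast hlt

theorem digits_stringValue_cons (hb : 1 < b) (hA : ∀ a ∈ A, a < b) {a : A} (ha : (a : ℕ) ≠ 0)
    (X : List A) :
    Nat.digits b (stringValue b (a :: X)) = ((a :: X).map Subtype.val).reverse := by
  refine Nat.digits_ofDigits b hb _ ?_ ?_
  · intro d hd
    obtain ⟨d, -, rfl⟩ := List.mem_map.mp (List.mem_reverse.mp hd)
    exact hA d d.2
  · simpa using ha

end DigitStrings

section KempnerMeasure

variable {b : ℕ} {E : Finset ℕ}

/-- The correspondence between strings of admissible digits and the lists indexing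
`kempnerMeasure`. The latter start with the least significant digit, hence the reversal. -/
def admissibleStringEquiv (b : ℕ) (E : Finset ℕ) :
    List (admissibleDigits b E) ≃ {l : List ℕ // ∀ d ∈ l, d < b ∧ d ∉ E} where
  toFun X := ⟨(X.map Subtype.val).reverse, by simp +contextual [mem_admissibleDigits]⟩
  invFun l := (l.1.attachWith (· ∈ admissibleDigits b E) fun d hd =>
    mem_admissibleDigits.mpr (l.2 d hd)).reverse
  left_inv X := by
    apply List.map_injective_iff.mpr Subtype.val_injective
    simp
  right_inv l := by simp

theorem kempnerMeasure_eq_sum (b : ℕ) (E : Finset ℕ) :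
    kempnerMeasure b E = Measure.sum fun X : List (admissibleDigits b E) =>
      ((b : ℝ≥0∞)⁻¹ ^ X.length) • Measure.dirac (stringPoint b X) := by
  rw [kempnerMeasure, ← Measure.sum_comp_equiv (admissibleStringEquiv b E)]
  simp [admissibleStringEquiv, stringPoint, stringValue, Function.comp_def, ENNReal.inv_pow]

theorem kempnerMeasure_eq_dirac_add (hb : 0 < b) :
    kempnerMeasure b E = Measure.dirac 0 + ∑ a ∈ admissibleDigits b E,
      (b : ℝ≥0∞)⁻¹ • (kempnerMeasure b E).map fun x : ℝ => ((a : ℝ) + x) / b := by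
  ext s hs
  have hmeas (a : ℕ) : Measurable fun x : ℝ => (a + x) / b := by fun_prop
  rw [← Finset.sum_coe_sort, kempnerMeasure_eq_sum]
  simp only [Measure.add_apply, Measure.finsetSum_apply, Measure.smul_apply, smul_eq_mul,
    Measure.map_apply (hmeas _) hs, Measure.sum_apply _ hs, Measure.sum_apply _ (hmeas _ hs),
    Measure.dirac_apply' _ hs, Measure.dirac_apply' _ (hmeas _ hs), ← ENNReal.tsum_mul_left]
  rw [tsum_list, tsum_fintype]
  simp [stringPoint_nil, stringPoint_cons hb, pow_succ', mul_assoc]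
  rfl

theorem kempnerMeasure_univ (hE : E.Nonempty) (hEb : E ⊆ Finset.range b) :
    kempnerMeasure b E Set.univ = b / E.card := by
  have hb : (b : ℝ≥0∞) ≠ 0 := by
    obtain ⟨d, hd⟩ := hE
    have := Finset.mem_range.mp (hEb hd)
    exact_mod_cast (by omega : b ≠ 0)
  have hcard : (E.card : ℝ≥0∞) + (admissibleDigits b E).card = b := by
    have := Finset.card_sdiff_add_card_eq_card hEb
    rw [Finset.card_range] at this
    rw [admissibleDigits, add_comm]
    exact_mod_cast this
  have hcompl : 1 - ((admissibleDigits b E).card : ℝ≥0∞) * (b : ℝ≥0∞)⁻¹ =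
      E.card * (b : ℝ≥0∞)⁻¹ := by
    refine ENNReal.sub_eq_of_eq_add (by finiteness) ?_
    rw [← add_mul, hcard, ENNReal.mul_inv_cancel hb (by finiteness)]
  rw [kempnerMeasure_eq_sum, Measure.sum_apply _ MeasurableSet.univ]
  simp only [Measure.smul_apply, measure_univ, smul_eq_mul, mul_one]
  rw [tsum_list_pow_length, Fintype.card_coe, hcompl, ← div_eq_mul_inv,
    ENNReal.inv_div (by simp) (by simp [hb])]

theorem isFiniteMeasure_kempnerMeasure (hE : E.Nonempty) (hEb : E ⊆ Finset.range b) :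
    IsFiniteMeasure (kempnerMeasure b E) := by
  refine ⟨?_⟩
  rw [kempnerMeasure_univ hE hEb]
  exact ENNReal.div_lt_top (by finiteness) (by simpa using hE.ne_empty)

theorem kempnerMeasure_real_univ (hE : E.Nonempty) (hEb : E ⊆ Finset.range b) :
    (kempnerMeasure b E).real Set.univ = b / E.card := by
  rw [measureReal_def, kempnerMeasure_univ hE hEb]
  simp

theorem ae_kempnerMeasure_mem_Ico (hb : 1 < b) : ∀ᵐ x ∂kempnerMeasure b E, x ∈ Set.Ico 0 1 := by
  rw [kempnerMeasure_eq_sum, Measure.ae_sum_iff]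
  intro X
  refine Measure.ae_smul_measure ?_ _
  exact (ae_dirac_iff measurableSet_Ico).mpr
    (stringPoint_mem_Ico (fun a ha => (mem_admissibleDigits.mp ha).1) hb X)

theorem ae_nonneg_kempnerMeasure (hb : 1 < b) : ∀ᵐ x ∂kempnerMeasure b E, 0 ≤ x :=
  (ae_kempnerMeasure_mem_Ico hb).mono fun _ hx => hx.1

theorem vMoment_eq_integral (hb : 1 < b) (m : ℕ) (d : ℝ) :
    vMoment b E m d = ∫ x, (d - x) ^ m ∂kempnerMeasure b E := by
  rw [vMoment, Measure.restrict_eq_self_of_ae_mem (ae_kempnerMeasure_mem_Ico hb)]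

theorem stieltjesTransform_kempnerMeasure (hb : 1 < b) (hE : E.Nonempty)
    (hEb : E ⊆ Finset.range b) {y : ℝ} (hy : 0 < y) :
    stieltjesTransform (kempnerMeasure b E) y =
      y⁻¹ + ∑ a ∈ admissibleDigits b E, stieltjesTransform (kempnerMeasure b E) (b * y + a) := by
  have := isFiniteMeasure_kempnerMeasure hE hEb
  have hb0 : 0 < b := by omega
  have hmap (a : ℕ) : AEMeasurable (fun x : ℝ => ((a : ℝ) + x) / b) (kempnerMeasure b E) := by
    fun_prop
  have hinv : Integrable (fun x => (y + x)⁻¹) (kempnerMeasure b E) :=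
    integrable_inv_add (ae_nonneg_kempnerMeasure hb) hy
  rw [kempnerMeasure_eq_dirac_add hb0] at hinv
  obtain ⟨hdirac, hsum⟩ := integrable_add_measure.mp hinv
  rw [integrable_finsetSum_measure] at hsum
  conv_lhs => rw [stieltjesTransform, kempnerMeasure_eq_dirac_add hb0]
  rw [integral_add_measure hdirac (integrable_finsetSum_measure.mpr hsum),
    integral_finsetSum_measure hsum, integral_dirac, add_zero]
  refine congrArg _ (Finset.sum_congr rfl fun a _ => ?_)
  rw [integral_smul_measure, integral_map (hmap a) (by fun_prop), stieltjesTransform,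
    ← integral_smul]
  refine integral_congr_ae (.of_forall fun x => ?_)
  have hb0' : (b : ℝ) ≠ 0 := by positivity
  simp only [ENNReal.toReal_inv, ENNReal.toReal_natCast, smul_eq_mul, ← mul_inv]
  congr 1
  field_simp
  ring

theorem hasSum_integral_kempnerMeasure {f : ℝ → ℝ} (hf : Integrable f (kempnerMeasure b E)) :
    HasSum (fun X : List (admissibleDigits b E) => ((b : ℝ) ^ X.length)⁻¹ * f (stringPoint b X))
      (∫ x, f x ∂kempnerMeasure b E) := by
  rw [kempnerMeasure_eq_sum] at hf ⊢
  simpa [integral_smul_measure] using hasSum_integral_measure hf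

end KempnerMeasure

section KempnerSum

variable {b : ℕ} {E : Finset ℕ}

/-- The admissible integer whose base-`b` digits are the nonzero leading digit `p.1` followed by
the string `p.2`. -/
def leadingDigitValue (b : ℕ) (E : Finset ℕ)
    (p : (admissibleDigits b E).erase 0 × List (admissibleDigits b E)) : ℕ :=
  stringValue b (⟨p.1, Finset.mem_of_mem_erase p.1.2⟩ :: p.2)

theorem digits_leadingDigitValue (hb : 1 < b)
    (p : (admissibleDigits b E).erase 0 × List (admissibleDigits b E)) :
    Nat.digits b (leadingDigitValue b E p) = ((p.1 : ℕ) :: p.2.map Subtype.val).reverse :=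
  digits_stringValue_cons hb (fun _ ha => (mem_admissibleDigits.mp ha).1)
    (Finset.ne_of_mem_erase p.1.2) p.2

theorem leadingDigitValue_injective (hb : 1 < b) :
    Function.Injective (leadingDigitValue b E) := by
  intro p q hpq
  have h := congrArg (Nat.digits b) hpq
  rw [digits_leadingDigitValue hb, digits_leadingDigitValue hb, List.reverse_inj] at h
  obtain ⟨hhead, htail⟩ := List.cons.inj h
  exact Prod.ext (Subtype.ext hhead) (List.map_injective_iff.mpr Subtype.val_injective htail)

theorem range_leadingDigitValue (hb : 1 < b) :
    Set.range (leadingDigitValue b E) = {n | n ≠ 0 ∧ ∀ d ∈ Nat.digits b n, d ∉ E} := by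
  ext n
  constructor
  · rintro ⟨p, rfl⟩
    have hdigits := digits_leadingDigitValue hb p
    refine ⟨fun h0 => by simp [h0] at hdigits, fun d hd => ?_⟩
    have hd' : d ∈ admissibleDigits b E := by
      rw [hdigits, List.mem_reverse, List.mem_cons] at hd
      obtain rfl | hd := hd
      · exact Finset.mem_of_mem_erase p.1.2
      · obtain ⟨d, -, rfl⟩ := List.mem_map.mp hd
        exact d.2
    exact (mem_admissibleDigits.mp hd').2
  · rintro ⟨hn, hnE⟩
    obtain ⟨X, hX⟩ := (admissibleStringEquiv b E).surjective
      ⟨Nat.digits b n, fun d hd => ⟨Nat.digits_lt_base hb hd, hnE d hd⟩⟩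
    have hdigits : (X.map Subtype.val).reverse = Nat.digits b n := congrArg Subtype.val hX
    have hlast := Nat.getLast_digit_ne_zero b hn
    simp only [← hdigits] at hlast
    cases X with
    | nil => exact absurd hdigits.symm (Nat.digits_ne_nil_iff_ne_zero.mpr hn)
    | cons a X =>
      refine ⟨(⟨a, Finset.mem_erase.mpr ⟨by simpa using hlast, a.2⟩⟩, X), ?_⟩
      exact (congrArg (Nat.ofDigits b) hdigits).trans (Nat.ofDigits_digits b n)

theorem inv_leadingDigitValue (hb : 0 < b)
    (p : (admissibleDigits b E).erase 0 × List (admissibleDigits b E)) :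
    (leadingDigitValue b E p : ℝ)⁻¹ =
      ((b : ℝ) ^ p.2.length)⁻¹ * ((p.1 : ℝ) + stringPoint b p.2)⁻¹ := by
  rw [leadingDigitValue, stringValue_cons, ← mul_inv, stringPoint]
  push_cast
  field_simp
  ring

theorem kempnerSum_eq_sum_stieltjesTransform (hb : 1 < b) (hE : E.Nonempty)
    (hEb : E ⊆ Finset.range b) :
    kempnerSum b E = ∑ a ∈ (admissibleDigits b E).erase 0,
      stieltjesTransform (kempnerMeasure b E) a := by
  have := isFiniteMeasure_kempnerMeasure hE hEb
  have hrange := range_leadingDigitValue (E := E) hb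
  have hfiber (a : (admissibleDigits b E).erase 0) :
      HasSum (fun X => (leadingDigitValue b E (a, X) : ℝ)⁻¹)
        (stieltjesTransform (kempnerMeasure b E) a) := by
    have ha : (0 : ℝ) < (a : ℕ) := by
      exact_mod_cast Nat.pos_of_ne_zero (Finset.ne_of_mem_erase a.2)
    simpa only [inv_leadingDigitValue (by omega : 0 < b), stieltjesTransform] using
      hasSum_integral_kempnerMeasure (integrable_inv_add (ae_nonneg_kempnerMeasure hb) ha)
  have hsum : Summable fun p => (leadingDigitValue b E p : ℝ)⁻¹ :=
    (summable_prod_of_nonneg fun p => by positivity).mpr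
      ⟨fun a => (hfiber a).summable, (hasSum_fintype _).summable⟩
  rw [kempnerSum, ← (leadingDigitValue_injective hb).tsum_eq fun n hn => hrange.superset <| by
    by_contra h
    exact hn (if_neg h)]
  calc ∑' p, (if leadingDigitValue b E p ≠ 0 ∧
          ∀ d ∈ Nat.digits b (leadingDigitValue b E p), d ∉ E
        then (leadingDigitValue b E p : ℝ)⁻¹ else 0)
      = ∑' p, (leadingDigitValue b E p : ℝ)⁻¹ :=
        tsum_congr fun p => if_pos (hrange.subset ⟨p, rfl⟩)
    _ = ∑' a : (admissibleDigits b E).erase 0, stieltjesTransform (kempnerMeasure b E) a := by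
        rw [hsum.tsum_prod]
        exact tsum_congr fun a => (hfiber a).tsum_eq
    _ = _ := by
        rw [tsum_fintype]
        exact Finset.sum_coe_sort _ fun a : ℕ => stieltjesTransform (kempnerMeasure b E) a

end KempnerSum

section MomentSeries

variable {b : ℕ} {E : Finset ℕ}

theorem ae_kempnerMeasure_abs_sub_le (hb : 1 < b) {d : ℕ} (hd : d < b) :
    ∀ᵐ x ∂kempnerMeasure b E, |(d : ℝ) - x| ≤ b - 1 := by
  filter_upwards [ae_kempnerMeasure_mem_Ico hb] with x hx
  have hb' : (2 : ℝ) ≤ b := by exact_mod_cast hb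
  have hd' : (d : ℝ) + 1 ≤ b := by exact_mod_cast hd
  rw [abs_le]
  constructor <;> linarith [hx.1, hx.2, d.cast_nonneg (α := ℝ)]

theorem abs_sum_vMoment_le (hb : 1 < b) (hE : E.Nonempty) (hEb : E ⊆ Finset.range b)
    {F : Finset ℕ} (hF : F ⊆ Finset.range b) (m : ℕ) :
    |∑ d ∈ F, vMoment b E m d| ≤ F.card * (b / E.card) * ((b : ℝ) - 1) ^ m := by
  have := isFiniteMeasure_kempnerMeasure hE hEb
  rw [mul_assoc, ← nsmul_eq_mul]
  refine (Finset.abs_sum_le_sum_abs _ _).trans (Finset.sum_le_card_nsmul _ _ _ fun d hd => ?_)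
  rw [vMoment_eq_integral hb, ← kempnerMeasure_real_univ hE hEb]
  exact abs_integral_sub_pow_le
    (ae_kempnerMeasure_abs_sub_le hb (Finset.mem_range.mp (hF hd))) m

theorem summable_zetaVal_mul_sum_vMoment_and_hasSum (hb : 1 < b) (hE : E.Nonempty)
    (hEb : E ⊆ Finset.range b) {F : Finset ℕ} (hF : F ⊆ Finset.range b) :
    Summable (fun m : ℕ =>
        zetaVal (m + 2) * (∑ d ∈ F, vMoment b E (m + 1) d) / (b : ℝ) ^ (m + 2)) ∧
      HasSum (fun k : ℕ => ∑ d ∈ F, (stieltjesTransform (kempnerMeasure b E) (b * (k + 1) - d) -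
          (b / E.card) / (b * (k + 1))))
        (∑' m : ℕ, zetaVal (m + 2) * (∑ d ∈ F, vMoment b E (m + 1) d) / (b : ℝ) ^ (m + 2)) := by
  have := isFiniteMeasure_kempnerMeasure hE hEb
  have hb' : (1 : ℝ) < b := by exact_mod_cast hb
  refine summable_zetaVal_mul_and_hasSum (v := fun m => ∑ d ∈ F, vMoment b E m d)
    (abs_sum_vMoment_le hb hE hEb hF) (sub_nonneg.mpr hb'.le) (sub_one_lt _) fun k => ?_
  have hk : (b : ℝ) - 1 < b * (k + 1) := by nlinarith [k.cast_nonneg (α := ℝ)]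
  simp only [Finset.sum_div, vMoment_eq_integral hb, ← kempnerMeasure_real_univ hE hEb]
  exact hasSum_sum fun d hd => hasSum_integral_sub_pow_succ_div
    (ae_kempnerMeasure_abs_sub_le hb (Finset.mem_range.mp (hF hd))) hk

theorem sum_image_sub_Eone (hb : 0 < b) (hE : E.Nonempty) (hEb : E ⊆ Finset.range b)
    (U : ℝ → ℝ) (k : ℕ) :
    ∑ d ∈ (Eone b E).image (b - ·), (U (b * (k + 1) - d) - (b / E.card) / (b * (k + 1))) =
      ∑ a ∈ Eone b E, U (b * k + a) - ((k : ℝ) + 1)⁻¹ := by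
  have hle {a : ℕ} (ha : a ∈ Eone b E) : a ≤ b :=
    (Finset.mem_Ioc.mp (Eone_subset_Ioc hb hEb ha)).2
  have hinj : Set.InjOn (b - ·) (Eone b E : Set ℕ) := fun a ha c hc hac => by
    have := hle ha
    have := hle hc
    dsimp only at hac
    omega
  have hbE : b ∉ E := fun h => by simpa using hEb h
  have hcard : (E.card : ℝ) ≠ 0 := by exact_mod_cast hE.card_ne_zero
  rw [Finset.sum_image hinj, Finset.sum_sub_distrib, Finset.sum_const, card_Eone hbE, nsmul_eq_mul]
  congr 1
  · refine Finset.sum_congr rfl fun a ha => congrArg U ?_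
    rw [Nat.cast_sub (hle ha)]
    ring
  · field_simp

theorem tendsto_sum_range_sum_Eone_stieltjesTransform (hb : 1 < b) (hE : E.Nonempty)
    (hEb : E ⊆ Finset.range b) :
    Tendsto (fun N => ∑ k ∈ Finset.range N,
        (∑ a ∈ Eone b E, stieltjesTransform (kempnerMeasure b E) (b * k + a) - ((k : ℝ) + 1)⁻¹))
      atTop (𝓝 (b / E.card * Real.log b - kempnerSum b E)) := by
  have := isFiniteMeasure_kempnerMeasure hE hEb
  have hμ := ae_nonneg_kempnerMeasure (E := E) hb
  have hb0 : 0 < b := by omega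
  set U := stieltjesTransform (kempnerMeasure b E) with hU
  have hblock : Tendsto (fun N : ℕ => ∑ m ∈ Finset.Ioc N (b * N), U m) atTop
      (𝓝 (b / E.card * Real.log b)) := by
    refine tendsto_sum_Ioc_mul_of_tendsto_mul ?_ hb0
    rw [← kempnerMeasure_real_univ hE hEb]
    exact (tendsto_mul_stieltjesTransform hμ).comp tendsto_natCast_atTop_atTop
  have hedge : Tendsto (fun N : ℕ => ∑ a ∈ (admissibleDigits b E).erase 0, U (b * N + a)) atTop
      (𝓝 0) := by
    simpa using tendsto_finsetSum ((admissibleDigits b E).erase 0) fun a _ =>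
      (tendsto_stieltjesTransform hμ).comp <| tendsto_atTop_add_const_right _ (a : ℝ) <|
        tendsto_natCast_atTop_atTop.const_mul_atTop (by positivity : (0 : ℝ) < b)
  have hlim := (hblock.add hedge).sub_const (kempnerSum b E)
  rw [add_zero] at hlim
  refine hlim.congr fun N => ?_
  have hfinite := sum_erase_zero_add_sum_range_sum_Eone hb0 hEb (f := fun n : ℕ => U n)
    (g := fun n : ℕ => (n : ℝ)⁻¹) (fun n hn => by
      have hn : (0 : ℝ) < n := by exact_mod_cast hn
      simpa using stieltjesTransform_kempnerMeasure hb hE hEb hn) N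
  push_cast at hfinite
  rw [kempnerSum_eq_sum_stieltjesTransform hb hE hEb, ← hU, ← hfinite, add_sub_cancel_left]

end MomentSeries

theorem kempner_zeta_series (b : ℕ) (hb : 2 ≤ b) (E : Finset ℕ)
    (hE : E.Nonempty) (hEsub : ∀ d ∈ E, d < b) :
    Summable (fun m : ℕ =>
      zetaVal (m + 2) * (∑ d ∈ (Eone b E).image (fun a => b - a),
        vMoment b E (m + 1) (d : ℝ)) / (b : ℝ) ^ (m + 2)) ∧
    kempnerSum b E = ((b : ℝ) / E.card) * Real.log b -
      ∑' m : ℕ, zetaVal (m + 2) * (∑ d ∈ (Eone b E).image (fun a => b - a),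
        vMoment b E (m + 1) (d : ℝ)) / (b : ℝ) ^ (m + 2) := by
  have hb0 : 0 < b := by omega
  have hEb : E ⊆ Finset.range b := fun d hd => Finset.mem_range.mpr (hEsub d hd)
  have hF : (Eone b E).image (b - ·) ⊆ Finset.range b := Finset.image_subset_iff.mpr fun a ha => by
    have := (Finset.mem_Ioc.mp (Eone_subset_Ioc hb0 hEb ha)).1
    exact Finset.mem_range.mpr (by omega)
  obtain ⟨hsummable, hhasSum⟩ := summable_zetaVal_mul_sum_vMoment_and_hasSum hb hE hEb hF
  simp only [sum_image_sub_Eone hb0 hE hEb] at hhasSum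
  have hlim := tendsto_nhds_unique hhasSum.tendsto_sum_nat
    (tendsto_sum_range_sum_Eone_stieltjesTransform hb hE hEb)
  exact ⟨hsummable, by linarith⟩
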